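/- For every ε > 0 there is a constant C_ε such that every finite set Λ ⊂ S¹ = {x ∈ ℝ² : |x| = 1} satisfies E₃(Λ) ≤ C_ε · |Λ|^{7/2+ε}. -/

import Mathlib

open MeasureTheory Real

noncomputable section

/-- The `k`-energy of a set `Λ`: the number of `2k`-tuples `(λ₁,…,λ₂ₖ) ∈ Λ^{2k}` with
`λ₁ + ⋯ + λ_k = λ_{k+1} + ⋯ + λ_{2k}`. -/
def energy {E : Type*} [AddCommMonoid E] (k : ℕ) (Λ : Set E) : ℕ :=
  Nat.card {fg : (Fin k → E) × (Fin k → E) //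
    (∀ i, fg.1 i ∈ Λ) ∧ (∀ i, fg.2 i ∈ Λ) ∧ ∑ i, fg.1 i = ∑ i, fg.2 i}

/-!
A nonzero complex number `s` is a sum of two unit complex numbers in at most two ways, because
`b + c = s` forces `b * c = s / conj s`. So, up to terms of size `|Λ| ^ 3`, the energy is
controlled by `∑ x, r x ^ 2`, where `r x` counts the pairs `(a, s) ∈ Λ × (Λ + Λ)` with sum `x`.
Each such pair is an incidence of `x` with one of at most `|Λ| ^ 2` unit circles centred in `Λ + Λ`.
The upper halves of these circles meet pairwise at most once, and so do the lower halves, hence the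
Szemerédi–Trotter theorem for pseudosegments leaves `O(|Λ| ^ 4 / k ^ 3)` points with `r x ≥ k`.
Using this for `k > √|Λ|`, and `∑ x, r x ≤ |Λ| ^ 3` for smaller `k`, gives
`∑ x, r x ^ 2 = O(|Λ| ^ (7 / 2))`.
-/

section Energy

open Finset
open scoped Pointwise

theorem energy_image_of_injective {E F : Type*} [AddCommMonoid E] [AddCommMonoid F] {f : E →+ F}
    (hf : Function.Injective f) (k : ℕ) (Λ : Set E) : energy k (f '' Λ) = energy k Λ := by
  symm
  refine Nat.card_congr (Equiv.ofBijective (fun t ↦ ⟨(f ∘ t.1.1, f ∘ t.1.2),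
    fun i ↦ Set.mem_image_of_mem f (t.2.1 i), fun i ↦ Set.mem_image_of_mem f (t.2.2.1 i), ?_⟩)
    ⟨?_, ?_⟩)
  · simp only [Function.comp_apply, ← map_sum, t.2.2.2]
  · rintro ⟨⟨u, v⟩, _⟩ ⟨⟨u', v'⟩, _⟩ h
    simp only [Subtype.mk.injEq, Prod.mk.injEq] at h ⊢
    exact ⟨hf.comp_left h.1, hf.comp_left h.2⟩
  · rintro ⟨⟨u, v⟩, hu, hv, huv⟩
    choose u' hu' hfu using fun i ↦ hu i
    choose v' hv' hfv using fun i ↦ hv i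
    refine ⟨⟨(u', v'), hu', hv', hf ?_⟩, Subtype.ext (Prod.ext (funext hfu) (funext hfv))⟩
    simpa only [map_sum, hfu, hfv] using huv

/-- The number of representations of `x` as an ordered sum of `k` elements of `A`. -/
def repCount {E : Type*} [AddCommMonoid E] [DecidableEq E] (k : ℕ) (A : Finset E) (x : E) : ℕ :=
  #{f ∈ Fintype.piFinset fun _ : Fin k ↦ A | ∑ i, f i = x}

theorem energy_coe_eq_sum_repCount_sq {E : Type*} [AddCommMonoid E] [DecidableEq E] (k : ℕ)
    (A : Finset E) : energy k (A : Set E) = ∑ x ∈ k • A, repCount k A x ^ 2 := by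
  set tuples := Fintype.piFinset fun _ : Fin k ↦ A
  set Z := {fg ∈ tuples ×ˢ tuples | ∑ i, fg.1 i = ∑ i, fg.2 i}
  have energy_eq : energy k (A : Set E) = #Z := by
    refine Nat.subtype_card Z fun fg ↦ ?_
    simp only [Z, tuples, mem_filter, mem_product, Fintype.mem_piFinset, mem_coe, and_assoc]
  have sum_mem : ∀ fg ∈ Z, ∑ i, fg.1 i ∈ k • A := by
    intro fg hfg
    have hf := Fintype.mem_piFinset.1 (mem_product.1 (mem_filter.1 hfg).1).1
    exact mem_nsmul.2 ⟨fun i ↦ ⟨fg.1 i, hf i⟩, List.sum_ofFn⟩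
  rw [energy_eq, card_eq_sum_card_fiberwise sum_mem]
  refine sum_congr rfl fun x _ ↦ ?_
  rw [repCount, sq, ← card_product]
  congr 1
  ext fg
  simp only [Z, mem_filter, mem_product]
  grind

theorem repCount_succ {E : Type*} [AddCommGroup E] [DecidableEq E] (k : ℕ) (A : Finset E) (x : E) :
    repCount (k + 1) A x = ∑ a ∈ A, repCount k A (x - a) := by
  rw [repCount, card_eq_sum_card_fiberwise (f := fun f ↦ f 0) (t := A)
    fun f hf ↦ Fintype.mem_piFinset.1 (mem_filter.1 hf).1 0]
  refine sum_congr rfl fun a ha ↦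
    card_nbij' Fin.tail (Fin.cons (α := fun _ : Fin (k + 1) ↦ E) a) ?_ ?_ ?_ ?_
  · intro f hf
    simp only [coe_filter, mem_filter, Fintype.mem_piFinset, Fin.sum_univ_succ,
      Set.mem_ofPred_eq] at hf ⊢
    exact ⟨fun i ↦ hf.1.1 i.succ, by rw [← hf.1.2, hf.2, add_sub_cancel_left]; rfl⟩
  · intro g hg
    simp only [coe_filter, mem_filter, Fintype.mem_piFinset, Set.mem_ofPred_eq] at hg ⊢
    refine ⟨⟨Fin.cases ha hg.1, ?_⟩, rfl⟩
    rw [Fin.sum_cons, hg.2, add_sub_cancel]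
  · intro f hf
    rw [← (mem_filter.1 hf).2, Fin.cons_self_tail]
  · intro g _
    exact Fin.tail_cons (α := fun _ : Fin (k + 1) ↦ E) a g

theorem repCount_two_le {E : Type*} [AddCancelCommMonoid E] [DecidableEq E] {A T : Finset E} {s : E}
    (hT : ∀ b ∈ A, ∀ c ∈ A, b + c = s → b ∈ T) : repCount 2 A s ≤ #T := by
  refine card_le_card_of_injOn (fun f ↦ f 0) (fun f hf ↦ ?_) fun f hf g hg hfg ↦ ?_
  · obtain ⟨hf, hs⟩ := mem_filter.1 hf
    rw [Fin.sum_univ_two] at hs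
    exact hT _ (Fintype.mem_piFinset.1 hf 0) _ (Fintype.mem_piFinset.1 hf 1) hs
  · have hs := (mem_filter.1 hf).2.trans (mem_filter.1 hg).2.symm
    rw [Fin.sum_univ_two, Fin.sum_univ_two, show f 0 = g 0 from hfg, add_right_inj] at hs
    exact funext (Fin.forall_fin_two.2 ⟨hfg, hs⟩)

theorem sum_addConvolution_le {E : Type*} [AddGroup E] [DecidableEq E] (A S Y : Finset E) :
    ∑ x ∈ Y, A.addConvolution S x ≤ #A * #S := by
  simp only [addConvolution]
  rw [← card_product, sum_card_fiberwise_eq_card_filter]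
  exact card_filter_le _ _

theorem addConvolution_union_le {E : Type*} [AddGroup E] [DecidableEq E] (A B S : Finset E)
    (x : E) : (A ∪ B).addConvolution S x ≤ A.addConvolution S x + B.addConvolution S x := by
  simp only [addConvolution, union_product, filter_union]
  exact card_union_le _ _

end Energy

section RichPoints

open Finset

theorem sq_le_mul_add_sum_Ioc (d K : ℕ) : d ^ 2 ≤ K * d + ∑ k ∈ Ioc K d, 2 * k := by
  induction d with
  | zero => simp
  | succ d ih =>
    rcases le_or_gt (d + 1) K with h | h
    · rw [Ioc_eq_empty_of_le h, sum_empty, add_zero, sq]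
      gcongr
    · rw [sum_Ioc_succ_top (by omega)]
      nlinarith

theorem sum_sq_le_mul_sum_add_sum_card_superlevel {α : Type*} (Y : Finset α) (r : α → ℕ) (K : ℕ) :
    ∑ x ∈ Y, r x ^ 2 ≤
      K * ∑ x ∈ Y, r x + ∑ k ∈ Ioo K (Y.sup r + 1), 2 * k * #{x ∈ Y | k ≤ r x} := by
  have Ioc_eq (x : α) (hx : x ∈ Y) :
      Ioc K (r x) = {k ∈ Ioo K (Y.sup r + 1) | k ≤ r x} := by
    have := le_sup (f := r) hx
    grind
  calc ∑ x ∈ Y, r x ^ 2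
      ≤ ∑ x ∈ Y, (K * r x + ∑ k ∈ Ioo K (Y.sup r + 1) with k ≤ r x, 2 * k) :=
        sum_le_sum fun x hx ↦ by simpa only [← Ioc_eq x hx] using sq_le_mul_add_sum_Ioc (r x) K
    _ = K * ∑ x ∈ Y, r x + ∑ k ∈ Ioo K (Y.sup r + 1), 2 * k * #{x ∈ Y | k ≤ r x} := by
        simp only [sum_add_distrib, ← mul_sum, sum_filter, card_filter]
        rw [sum_comm]
        simp only [mul_sum, mul_ite, mul_one, mul_zero]

/-- Splitting at height `K`: heights up to `K` are controlled by the mean of `r`, larger ones by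
the decay of its distribution function. -/
theorem sum_sq_le_of_card_superlevel_le {α : Type*} {Y : Finset α} {r : α → ℕ} {B : ℝ}
    (hB : ∀ k : ℕ, (k : ℝ) ^ 3 * #{x ∈ Y | k ≤ r x} ≤ B) (K : ℕ) :
    (∑ x ∈ Y, r x ^ 2 : ℝ) ≤ K * ∑ x ∈ Y, (r x : ℝ) + 4 * B / (K + 1) := by
  set n := Y.sup r + 1
  have layer_le (k : ℕ) (hk : k ∈ Ioo K n) :
      (2 * k * #{x ∈ Y | k ≤ r x} : ℝ) ≤ 2 * B * ((k : ℝ) ^ 2)⁻¹ := by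
    have hk0 : (0 : ℝ) < k := by exact_mod_cast (mem_Ioo.1 hk).1.pos
    rw [← div_eq_mul_inv, le_div_iff₀ (by positivity)]
    linarith [hB k]
  have hB0 : 0 ≤ B := by simpa using hB 0
  calc (∑ x ∈ Y, r x ^ 2 : ℝ)
      ≤ K * ∑ x ∈ Y, (r x : ℝ) + ∑ k ∈ Ioo K n, (2 * k * #{x ∈ Y | k ≤ r x} : ℝ) := by
        exact_mod_cast sum_sq_le_mul_sum_add_sum_card_superlevel Y r K
    _ ≤ K * ∑ x ∈ Y, (r x : ℝ) + 2 * B * ∑ k ∈ Ioo K n, ((k : ℝ) ^ 2)⁻¹ := by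
        rw [mul_sum _ _ (2 * B)]
        exact add_le_add_right (sum_le_sum layer_le) _
    _ ≤ K * ∑ x ∈ Y, (r x : ℝ) + 2 * B * (2 / (K + 1)) := by
        gcongr
        exact sum_Ioo_inv_sq_le K n
    _ = K * ∑ x ∈ Y, (r x : ℝ) + 4 * B / (K + 1) := by ring

end RichPoints

section Sampling

open Finset

variable {α R : Type*} [DecidableEq α] [CommRing R]

/-- The weights are the law of a random subset of `V` in which each element is kept independently
with probability `p`. -/
theorem sum_powerset_superset_bernoulli {A V : Finset α} (hA : A ⊆ V) (p : R) :
    ∑ W ∈ V.powerset with A ⊆ W, p ^ #W * (1 - p) ^ #(V \ W) = p ^ #A := by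
  have expand := prod_add (fun _ ↦ p) (fun i ↦ if i ∈ A then 0 else 1 - p) V
  have factor (i : α) : p + (if i ∈ A then 0 else 1 - p) = if i ∈ A then p else 1 := by
    split_ifs <;> ring
  simp only [factor, prod_ite_mem, inter_eq_right.2 hA, prod_const] at expand
  rw [expand, sum_filter]
  refine sum_congr rfl fun W _ ↦ ?_
  split_ifs with hAW
  · rw [prod_congr rfl fun i hi ↦ if_neg fun hiA ↦ (mem_sdiff.1 hi).2 (hAW hiA), prod_const]
  · obtain ⟨i, hiA, hiW⟩ := not_subset.1 hAW
    rw [prod_eq_zero (mem_sdiff.2 ⟨hA hiA, hiW⟩) (by rw [if_pos hiA]), mul_zero]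

theorem sum_bernoulli_mul_card_filter_subset {τ : Type*} {V : Finset α} (p : R) {j : ℕ}
    {T : Finset τ} {g : τ → Finset α} (hg : ∀ t ∈ T, g t ⊆ V ∧ #(g t) = j) :
    ∑ W ∈ V.powerset, p ^ #W * (1 - p) ^ #(V \ W) * #{t ∈ T | g t ⊆ W} = p ^ j * #T := by
  calc ∑ W ∈ V.powerset, p ^ #W * (1 - p) ^ #(V \ W) * #{t ∈ T | g t ⊆ W}
      = ∑ t ∈ T, ∑ W ∈ V.powerset with g t ⊆ W, p ^ #W * (1 - p) ^ #(V \ W) := by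
        simp only [card_filter, Nat.cast_sum, mul_sum, sum_filter]
        rw [sum_comm]
        simp
    _ = ∑ _ ∈ T, p ^ j := sum_congr rfl fun t ht ↦ by
        rw [sum_powerset_superset_bernoulli (hg t ht).1, (hg t ht).2]
    _ = p ^ j * #T := by rw [sum_const, nsmul_eq_mul, mul_comm]

end Sampling

section Consecutive

open Finset

/-- The pairs of neighbouring elements of a finite subset of a linear order. -/
def consecutive {α : Type*} [LinearOrder α] (X : Finset α) : Finset (α × α) :=
  {ab ∈ X ×ˢ X | ab.1 < ab.2 ∧ ∀ x ∈ X, ¬ (ab.1 < x ∧ x < ab.2)}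

variable {α : Type*} [LinearOrder α] {X : Finset α} {ab cd : α × α}

theorem card_le_card_consecutive_add_one (X : Finset α) : #X ≤ #(consecutive X) + 1 := by
  rcases X.eq_empty_or_nonempty with rfl | hX
  · simp
  have surj : Set.SurjOn Prod.fst (consecutive X : Set (α × α)) (X.erase (X.max' hX)) := by
    intro a ha
    obtain ⟨hne, ha⟩ := mem_erase.1 ha
    obtain ⟨b, hb, hmin⟩ := exists_min_image {b ∈ X | a < b} id
      ⟨_, mem_filter.2 ⟨X.max'_mem hX, (X.le_max' a ha).lt_of_ne hne⟩⟩
    obtain ⟨hb, hab⟩ := mem_filter.1 hb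
    exact ⟨(a, b), mem_filter.2 ⟨mem_product.2 ⟨ha, hb⟩, hab,
      fun x hx hxab ↦ (hmin x (mem_filter.2 ⟨hx, hxab.1⟩)).not_gt hxab.2⟩, rfl⟩
  have := card_le_card_of_surjOn _ surj
  rw [card_erase_of_mem (X.max'_mem hX)] at this
  omega

theorem eq_of_mem_consecutive (hab : ab ∈ consecutive X) (hcd : cd ∈ consecutive X) {x : α}
    (hx : x ∈ Set.Ioo ab.1 ab.2) (hx' : x ∈ Set.Ioo cd.1 cd.2) : ab = cd := by
  obtain ⟨hab, -, no_between⟩ := mem_filter.1 hab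
  obtain ⟨hcd, -, no_between'⟩ := mem_filter.1 hcd
  obtain ⟨ha, hb⟩ := mem_product.1 hab
  obtain ⟨hc, hd⟩ := mem_product.1 hcd
  refine Prod.ext (le_antisymm ?_ ?_) (le_antisymm ?_ ?_) <;> by_contra! hlt
  · exact no_between' _ ha ⟨hlt, hx.1.trans hx'.2⟩
  · exact no_between _ hc ⟨hlt, hx'.1.trans hx.2⟩
  · exact no_between _ hd ⟨hx.1.trans hx'.2, hlt⟩
  · exact no_between' _ hb ⟨hx'.1.trans hx.2, hlt⟩

end Consecutive

/-- A compact arc in the plane, the graph of a function over `[left, right]`. The function is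
required to be continuous on all of `ℝ`, so that arcs can be cut without side conditions. -/
structure PlanarArc where
  left : ℝ
  right : ℝ
  toFun : C(ℝ, ℝ)

namespace PlanarArc

open Finset Set

instance : CoeFun PlanarArc fun _ ↦ ℝ → ℝ := ⟨fun e ↦ e.toFun⟩

instance : DecidableEq PlanarArc := Classical.decEq _

/-- The points of the plane that lie on an arc. -/
def graph (e : PlanarArc) : Set (ℝ × ℝ) := {p | p.1 ∈ Icc e.left e.right ∧ e p.1 = p.2}

instance (e : PlanarArc) : DecidablePred (· ∈ e.graph) := Classical.decPred _

/-- The left endpoint of an arc. -/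
def source (e : PlanarArc) : ℝ × ℝ := (e.left, e e.left)

/-- The right endpoint of an arc. -/
def target (e : PlanarArc) : ℝ × ℝ := (e.right, e e.right)

/-- The set of the two endpoints of an arc. -/
def ends (e : PlanarArc) : Finset (ℝ × ℝ) := {e.source, e.target}

/-- Two distinct arcs cross if their relative interiors meet. -/
def Crosses (e e' : PlanarArc) : Prop :=
  e ≠ e' ∧ ∃ x ∈ Ioo e.left e.right ∩ Ioo e'.left e'.right, e x = e' x

/-- Distinct arcs of a family of pseudosegments share at most one point. -/
def Pseudosegments (F : Set PlanarArc) : Prop :=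
  F.Pairwise fun e e' ↦ (e.graph ∩ e'.graph).Subsingleton

/-- A drawing of a simple graph in the plane with vertex set `V` and edge set `F`. Edges may cross
and may pass through vertices. -/
structure IsDrawing (V : Finset (ℝ × ℝ)) (F : Finset PlanarArc) : Prop where
  left_lt_right : ∀ e ∈ F, e.left < e.right
  source_mem : ∀ e ∈ F, e.source ∈ V
  target_mem : ∀ e ∈ F, e.target ∈ V
  pseudosegments : Pseudosegments (F : Set PlanarArc)

variable {e e' e₁ e₂ e₁' e₂' : PlanarArc} {V W : Finset (ℝ × ℝ)} {F : Finset PlanarArc}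
  {w : ℝ × ℝ} {a b : ℝ}

theorem exists_mem_Ioo_eq (hab : a ≤ b) (ha : e a < e' a) (hb : e' b < e b) :
    ∃ c ∈ Ioo a b, e c = e' c := by
  obtain ⟨c, hc, heq⟩ := isPreconnected_Icc.intermediate_value₂ (left_mem_Icc.2 hab)
    (right_mem_Icc.2 hab) e.toFun.continuous.continuousOn e'.toFun.continuous.continuousOn
    ha.le hb.le
  refine ⟨c, ⟨hc.1.lt_of_ne ?_, hc.2.lt_of_ne ?_⟩, heq⟩
  · rintro rfl
    exact ha.ne heq
  · rintro rfl
    exact hb.ne' heq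

theorem crosses_of_lt_of_lt (hab : a ≤ b) (ha : e a < e' a) (hb : e' b < e b)
    (hl : e.left ≤ a) (hl' : e'.left ≤ a) (hr : b ≤ e.right) (hr' : b ≤ e'.right) :
    Crosses e e' := by
  refine ⟨fun h ↦ ha.ne (by rw [h]), ?_⟩
  obtain ⟨c, ⟨hac, hcb⟩, heq⟩ := exists_mem_Ioo_eq hab ha hb
  exact ⟨c, ⟨⟨by linarith, by linarith⟩, by linarith, by linarith⟩, heq⟩

/-- Order of the arcs leaving a common source, from bottom to top. -/
def Below (e e' : PlanarArc) : Prop :=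
  e.source = e'.source ∧ ∀ x, e.left < x → x ≤ e.right → x ≤ e'.right → e x < e' x

theorem Below.left_eq (h : Below e e') : e.left = e'.left := congrArg Prod.fst h.1

theorem Below.apply_left_eq (h : Below e e') : e e.left = e' e.left := by
  simpa only [source, ← h.left_eq] using congrArg Prod.snd h.1

theorem below_or_below (hgraph : (e.graph ∩ e'.graph).Subsingleton)
    (hs : e.source = e'.source) : Below e e' ∨ Below e' e := by
  have hleft : e.left = e'.left := congrArg Prod.fst hs
  have ne (x : ℝ) (hx : e.left < x) (hxr : x ≤ e.right) (hxr' : x ≤ e'.right) : e x ≠ e' x := by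
    intro heq
    have hx_mem : (x, e x) ∈ e.graph ∩ e'.graph :=
      ⟨⟨⟨hx.le, hxr⟩, rfl⟩, ⟨hleft ▸ hx.le, hxr'⟩, heq.symm⟩
    have hs_mem : e.source ∈ e.graph ∩ e'.graph :=
      ⟨⟨⟨le_rfl, hx.le.trans hxr⟩, rfl⟩,
        hs ▸ ⟨⟨le_rfl, (hleft ▸ hx.le : e'.left ≤ x).trans hxr'⟩, rfl⟩⟩
    exact hx.ne' (congrArg Prod.fst (hgraph hx_mem hs_mem))
  by_contra! h
  obtain ⟨x, hx, hxr, hxr', hle⟩ : ∃ x, e.left < x ∧ x ≤ e.right ∧ x ≤ e'.right ∧ e' x ≤ e x := by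
    simpa [Below, hs] using h.1
  obtain ⟨y, hy, hyr', hyr, hle'⟩ :
      ∃ y, e'.left < y ∧ y ≤ e'.right ∧ y ≤ e.right ∧ e y ≤ e' y := by
    simpa [Below, hs] using h.2
  obtain ⟨c, hc, heq⟩ := isPreconnected_uIcc.intermediate_value₂ (right_mem_uIcc (a := x))
    (left_mem_uIcc (b := y)) e.toFun.continuous.continuousOn e'.toFun.continuous.continuousOn
    hle' hle
  rcases mem_uIcc.1 hc with hc | hc <;>
  exact ne c (by linarith) (by linarith) (by linarith) heq

/-- `e'` is the arc of `F` that follows `e` in the upward order around their common source. -/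
structure IsNext (F : Finset PlanarArc) (e e' : PlanarArc) : Prop where
  mem : e ∈ F
  mem_next : e' ∈ F
  below : Below e e'
  eq_or_below : ∀ e'' ∈ F, Below e e'' → e' = e'' ∨ Below e' e''

theorem exists_isNext (hlt : ∀ e ∈ F, e.left < e.right)
    (hF : Pseudosegments (F : Set PlanarArc)) (he : e ∈ F) (habove : ∃ e' ∈ F, Below e e') :
    ∃ e', IsNext F e e' := by
  classical
  set G := {e' ∈ F | Below e e'}
  have hG : G.Nonempty := habove.imp fun e' h ↦ Finset.mem_filter.2 h
  obtain ⟨shortest, hshort, hright⟩ := exists_min_image G right hG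
  obtain ⟨e', he', hmin⟩ := exists_min_image G (fun e' ↦ e' shortest.right) hG
  obtain ⟨heF', hbelow⟩ := Finset.mem_filter.1 he'
  refine ⟨e', he, heF', hbelow, fun e'' he'' hbelow' ↦ ?_⟩
  have he''G : e'' ∈ G := Finset.mem_filter.2 ⟨he'', hbelow'⟩
  by_cases hne : e' = e''
  · exact Or.inl hne
  refine Or.inr ((below_or_below (hF heF' he'' hne) (hbelow.1.symm.trans hbelow'.1)).resolve_right
    fun hlower ↦ (hmin e'' he''G).not_gt ?_)
  obtain ⟨hshortF, hshort_below⟩ := Finset.mem_filter.1 hshort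
  refine hlower.2 _ ?_ (hright _ he''G) (hright _ he')
  rw [← hbelow'.left_eq, hshort_below.left_eq]
  exact hlt _ hshortF

/-- The region between two arcs leaving a common source, without the source. -/
def wedge (e e' : PlanarArc) : Set (ℝ × ℝ) :=
  {w | w.1 ∈ Ioc e.left (min e.right e'.right) ∧ w.2 ∈ Icc (e w.1) (e' w.1)}

/-- The arc `e` is charged to a leftmost vertex `w` in the wedge between `e` and its successor
`e'`. -/
structure Charges (V : Finset (ℝ × ℝ)) (F : Finset PlanarArc) (e e' : PlanarArc) (w : ℝ × ℝ) :
    Prop where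
  isNext : IsNext F e e'
  mem : w ∈ V
  mem_wedge : w ∈ wedge e e'
  leftmost : ∀ v ∈ V, v ∈ wedge e e' → w.1 ≤ v.1

theorem IsNext.exists_charges (hD : IsDrawing V F) (h : IsNext F e e') :
    ∃ w, Charges V F e e' w := by
  classical
  have hlt := hD.left_lt_right e h.mem
  have hlt' : e.left < e'.right := h.below.left_eq ▸ hD.left_lt_right e' h.mem_next
  have hne : {w ∈ V | w ∈ wedge e e'}.Nonempty := by
    rcases le_total e.right e'.right with hle | hle
    · exact ⟨e.target, Finset.mem_filter.2 ⟨hD.target_mem e h.mem,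
        ⟨hlt, le_min le_rfl hle⟩, le_rfl, (h.below.2 _ hlt le_rfl hle).le⟩⟩
    · exact ⟨e'.target, Finset.mem_filter.2 ⟨hD.target_mem e' h.mem_next,
        ⟨hlt', le_min hle le_rfl⟩, (h.below.2 _ hlt' hle le_rfl).le, le_rfl⟩⟩
  obtain ⟨w, hw, hleft⟩ := exists_min_image _ Prod.fst hne
  obtain ⟨hwV, hw⟩ := Finset.mem_filter.1 hw
  exact ⟨w, h, hwV, hw, fun v hv hvw ↦ hleft v (Finset.mem_filter.2 ⟨hv, hvw⟩)⟩

theorem Charges.eq_of_source_eq (hF : Pseudosegments (F : Set PlanarArc))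
    (h : Charges V F e₁ e₂ w) (h' : Charges V F e₁' e₂' w) (hlt : e₁ w.1 < e₂' w.1)
    (hlt' : e₁' w.1 < e₂ w.1) (hs : e₁.source = e₁'.source) : e₁ = e₁' := by
  have not_below {e₁ e₂ e₁' e₂' : PlanarArc} (h : Charges V F e₁ e₂ w)
      (h' : Charges V F e₁' e₂' w) (hlt' : e₁' w.1 < e₂ w.1) : ¬ Below e₁ e₁' := by
    intro hbelow
    obtain ⟨⟨hl, hr⟩, -⟩ := h.mem_wedge
    obtain ⟨⟨-, hr'⟩, -⟩ := h'.mem_wedge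
    rcases h.isNext.eq_or_below e₁' h'.isNext.mem hbelow with heq | hbelow'
    · exact hlt'.ne (by rw [heq])
    · exact lt_asymm hlt' (hbelow'.2 _ (h.isNext.below.left_eq ▸ hl)
        (hr.trans (min_le_right _ _)) (hr'.trans (min_le_left _ _)))
  by_contra hne
  rcases below_or_below (hF h.isNext.mem h'.isNext.mem hne) hs with hbelow | hbelow
  · exact not_below h h' hlt' hbelow
  · exact not_below h' h hlt hbelow

theorem Charges.lt_or_lt_of_source_ne (hsource : e₁'.source ∈ V) (h : Charges V F e₁ e₂ w)
    (hlt : e₁'.left < w.1) (hle : e₁.left ≤ e₁'.left) (hs : e₁.source ≠ e₁'.source) :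
    e₁' e₁'.left < e₁ e₁'.left ∨ e₂ e₁'.left < e₁' e₁'.left := by
  have hleft := h.isNext.below.apply_left_eq
  rcases hle.eq_or_lt with heq | hlt_left
  · rw [← heq, ← hleft]
    refine lt_or_gt_of_ne fun hne ↦ hs (Prod.ext heq ?_)
    simpa only [source, ← heq] using hne.symm
  · by_contra! hcon
    obtain ⟨⟨-, hr⟩, -⟩ := h.mem_wedge
    exact hlt.not_ge (h.leftmost _ hsource ⟨⟨hlt_left, hlt.le.trans hr⟩, hcon⟩)

theorem Charges.source_eq (hV : ∀ e ∈ F, e.source ∈ V)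
    (hX : ∀ e ∈ F, ∀ e' ∈ F, ¬ Crosses e e') (h : Charges V F e₁ e₂ w)
    (h' : Charges V F e₁' e₂' w) (hlt : e₁ w.1 < e₂' w.1) (hlt' : e₁' w.1 < e₂ w.1) :
    e₁.source = e₁'.source := by
  wlog hle : e₁.left ≤ e₁'.left generalizing e₁ e₂ e₁' e₂'
  · exact (this h' h hlt' hlt (le_of_not_ge hle)).symm
  by_contra hs
  have hleft := h.isNext.below.left_eq
  have hleft' := h'.isNext.below.left_eq
  have hval' := h'.isNext.below.apply_left_eq
  obtain ⟨⟨-, hr⟩, -⟩ := h.mem_wedge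
  obtain ⟨⟨hl', hr'⟩, -⟩ := h'.mem_wedge
  obtain ⟨hr₁, hr₂⟩ := le_min_iff.1 hr
  obtain ⟨hr₁', hr₂'⟩ := le_min_iff.1 hr'
  rcases h.lt_or_lt_of_source_ne (hV e₁' h'.isNext.mem) hl' hle hs with hout | hout
  · rw [hval'] at hout
    exact hX e₂' h'.isNext.mem_next e₁ h.isNext.mem
      (crosses_of_lt_of_lt hl'.le hout hlt hleft'.ge hle hr₂' hr₁)
  · exact hX e₂ h.isNext.mem_next e₁' h'.isNext.mem
      (crosses_of_lt_of_lt hl'.le hout hlt' (hleft ▸ hle) le_rfl hr₂ hr₁')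

theorem Charges.eq (hD : IsDrawing V F) (hX : ∀ e ∈ F, ∀ e' ∈ F, ¬ Crosses e e')
    (h : Charges V F e₁ e₂ w) (h' : Charges V F e₁' e₂' w) (hlt : e₁ w.1 < e₂' w.1)
    (hlt' : e₁' w.1 < e₂ w.1) : e₁ = e₁' :=
  h.eq_of_source_eq hD.pseudosegments h' hlt hlt' (h.source_eq hD.source_mem hX h' hlt hlt')

open scoped Classical in
/-- A vertex is charged at most once by arcs whose successor passes strictly above it, and at most
once by arcs that pass strictly below it. -/
theorem IsDrawing.card_filter_exists_below_le (hD : IsDrawing V F)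
    (hX : ∀ e ∈ F, ∀ e' ∈ F, ¬ Crosses e e') : #{e ∈ F | ∃ e' ∈ F, Below e e'} ≤ 2 * #V := by
  rw [show 2 * #V = #(V ×ˢ (Finset.univ : Finset Bool)) by
    rw [card_product, Finset.card_univ, Fintype.card_bool, mul_comm]]
  refine card_le_card_of_forall_subsingleton (fun e t ↦ ∃ e', Charges V F e e' t.1 ∧
    if t.2 then t.1.2 < e' t.1.1 else e t.1.1 < t.1.2) ?_ ?_
  · intro e he
    obtain ⟨he, habove⟩ := Finset.mem_filter.1 he
    obtain ⟨e', hnext⟩ := exists_isNext hD.left_lt_right hD.pseudosegments he habove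
    obtain ⟨w, hw⟩ := hnext.exists_charges hD
    obtain ⟨⟨hl, hr⟩, -⟩ := hw.mem_wedge
    have hlt := hnext.below.2 w.1 hl (hr.trans (min_le_left _ _)) (hr.trans (min_le_right _ _))
    rcases lt_or_ge w.2 (e' w.1) with hw_lt | hw_ge
    · exact ⟨(w, true), by simpa using hw.mem, e', hw, hw_lt⟩
    · exact ⟨(w, false), by simpa using hw.mem, e', hw, by simpa using hlt.trans_le hw_ge⟩
  · rintro ⟨w, b⟩ - e ⟨-, f, h, hb⟩ e' ⟨-, f', h', hb'⟩
    obtain ⟨-, hl, hu⟩ := h.mem_wedge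
    obtain ⟨-, hl', hu'⟩ := h'.mem_wedge
    cases b <;> simp only [if_true, Bool.false_eq_true, if_false] at hb hb'
    · exact h.eq hD hX h' (hb.trans_le hu') (hb'.trans_le hu)
    · exact h.eq hD hX h' (hl.trans_lt hb') (hl'.trans_lt hb)

/-- Euler's formula is replaced by a charging argument: the topmost arc at a source is charged to
that source, every other arc to a leftmost vertex of its wedge. -/
theorem IsDrawing.card_le_of_forall_not_crosses (hD : IsDrawing V F)
    (hX : ∀ e ∈ F, ∀ e' ∈ F, ¬ Crosses e e') : #F ≤ 3 * #V := by
  classical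
  set tops := {e ∈ F | ¬ ∃ e' ∈ F, Below e e'}
  set others := {e ∈ F | ∃ e' ∈ F, Below e e'}
  have card_tops : #tops ≤ #V := by
    refine card_le_card_of_injOn source (fun e he ↦ ?_) fun e he e' he' hs ↦ ?_
    · exact hD.source_mem e (Finset.mem_filter.1 he).1
    · obtain ⟨he, htop⟩ := Finset.mem_filter.1 he
      obtain ⟨he', htop'⟩ := Finset.mem_filter.1 he'
      by_contra hne
      rcases below_or_below (hD.pseudosegments he he' hne) hs with h | h
      · exact htop ⟨e', he', h⟩
      · exact htop' ⟨e, he, h⟩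
  have card_others : #others ≤ 2 * #V := hD.card_filter_exists_below_le hX
  have card_split := card_filter_add_card_filter_not (s := F) fun e ↦ ∃ e' ∈ F, Below e e'
  linarith

open scoped Classical in
/-- The ordered pairs of crossing arcs of `F`. -/
def crossingPairs (F : Finset PlanarArc) : Finset (PlanarArc × PlanarArc) :=
  {c ∈ F ×ˢ F | Crosses c.1 c.2}

theorem mem_crossingPairs {c : PlanarArc × PlanarArc} :
    c ∈ crossingPairs F ↔ (c.1 ∈ F ∧ c.2 ∈ F) ∧ Crosses c.1 c.2 := by
  simp only [crossingPairs, Finset.mem_filter, Finset.mem_product]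

theorem IsDrawing.card_le (hD : IsDrawing V F) : #F ≤ 3 * #V + #(crossingPairs F) := by
  classical
  set crossing := {e ∈ F | ∃ e' ∈ F, Crosses e e'}
  set planar := {e ∈ F | ¬ ∃ e' ∈ F, Crosses e e'}
  have card_crossing : #crossing ≤ #(crossingPairs F) := by
    refine card_le_card_of_surjOn Prod.fst fun e he ↦ ?_
    obtain ⟨he, e', he', hc⟩ := Finset.mem_filter.1 he
    exact ⟨(e, e'), mem_crossingPairs.2 ⟨⟨he, he'⟩, hc⟩, rfl⟩
  have planar_drawing : IsDrawing V planar :=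
    { left_lt_right := fun e he ↦ hD.left_lt_right e (filter_subset _ _ he)
      source_mem := fun e he ↦ hD.source_mem e (filter_subset _ _ he)
      target_mem := fun e he ↦ hD.target_mem e (filter_subset _ _ he)
      pseudosegments := hD.pseudosegments.mono (coe_subset.2 (filter_subset _ _)) }
  have card_planar := planar_drawing.card_le_of_forall_not_crosses fun e he e' he' hc ↦
    (Finset.mem_filter.1 he).2 ⟨e', filter_subset _ _ he', hc⟩
  have card_split := card_filter_add_card_filter_not (s := F) fun e ↦ ∃ e' ∈ F, Crosses e e'
  linarith

theorem IsDrawing.induce (hD : IsDrawing V F) (W : Finset (ℝ × ℝ)) :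
    IsDrawing W {e ∈ F | e.ends ⊆ W} where
  left_lt_right e he := hD.left_lt_right e (filter_subset _ _ he)
  source_mem e he := (Finset.mem_filter.1 he).2 (by simp [ends])
  target_mem e he := (Finset.mem_filter.1 he).2 (by simp [ends])
  pseudosegments := hD.pseudosegments.mono (coe_subset.2 (filter_subset _ _))

theorem IsDrawing.ends_subset (hD : IsDrawing V F) (he : e ∈ F) : e.ends ⊆ V := by
  simp [ends, Finset.insert_subset_iff, hD.source_mem e he, hD.target_mem e he]

theorem IsDrawing.card_ends (hD : IsDrawing V F) (he : e ∈ F) : #e.ends = 2 :=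
  card_pair fun h ↦ (hD.left_lt_right e he).ne (congrArg Prod.fst h)

theorem IsDrawing.card_filter_ends_subset_le (hD : IsDrawing V F) (W : Finset (ℝ × ℝ)) :
    #{e ∈ F | e.ends ⊆ W} ≤ 3 * #W + #{c ∈ crossingPairs F | c.1.ends ∪ c.2.ends ⊆ W} := by
  refine (hD.induce W).card_le.trans (Nat.add_le_add_left (card_le_card fun c hc ↦ ?_) _)
  obtain ⟨⟨h₁, h₂⟩, hc⟩ := mem_crossingPairs.1 hc
  obtain ⟨h₁, hW₁⟩ := Finset.mem_filter.1 h₁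
  obtain ⟨h₂, hW₂⟩ := Finset.mem_filter.1 h₂
  exact Finset.mem_filter.2 ⟨mem_crossingPairs.2 ⟨⟨h₁, h₂⟩, hc⟩, Finset.union_subset hW₁ hW₂⟩

theorem mem_graph_of_mem_ends (hlt : e.left < e.right) {p : ℝ × ℝ} (hp : p ∈ e.ends) :
    p ∈ e.graph := by
  rcases Finset.mem_insert.1 hp with rfl | hp
  · exact ⟨⟨le_rfl, hlt.le⟩, rfl⟩
  · rw [Finset.mem_singleton.1 hp]
    exact ⟨⟨hlt.le, le_rfl⟩, rfl⟩

theorem fst_notMem_Ioo_of_mem_ends {p : ℝ × ℝ} (hp : p ∈ e.ends) : p.1 ∉ Ioo e.left e.right := by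
  rcases Finset.mem_insert.1 hp with rfl | hp
  · exact fun h ↦ h.1.ne rfl
  · rw [Finset.mem_singleton.1 hp]
    exact fun h ↦ h.2.ne rfl

theorem IsDrawing.disjoint_ends (hD : IsDrawing V F) (he : e ∈ F) (he' : e' ∈ F)
    (hc : Crosses e e') : Disjoint e.ends e'.ends := by
  obtain ⟨hne, x, ⟨hx, hx'⟩, heq⟩ := hc
  refine Finset.disjoint_left.2 fun p hp hp' ↦ fst_notMem_Ioo_of_mem_ends hp ?_
  have p_eq : p = (x, e x) := hD.pseudosegments he he' hne
    ⟨mem_graph_of_mem_ends (hD.left_lt_right e he) hp,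
      mem_graph_of_mem_ends (hD.left_lt_right e' he') hp'⟩
    ⟨⟨Ioo_subset_Icc_self hx, rfl⟩, Ioo_subset_Icc_self hx', heq.symm⟩
  rwa [p_eq]

/-- The bound `IsDrawing.card_le` is amplified by averaging it over a random set of vertices in
which each vertex is kept with probability `p`. -/
theorem IsDrawing.crossing_inequality (hD : IsDrawing V F) {p : ℝ} (hp : p ∈ Icc (0 : ℝ) 1) :
    p ^ 2 * #F ≤ 3 * p * #V + p ^ 4 * #(crossingPairs F) := by
  have hedges := sum_bernoulli_mul_card_filter_subset p
    fun e he ↦ ⟨hD.ends_subset he, hD.card_ends he⟩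
  have hvertices := sum_bernoulli_mul_card_filter_subset p
    (fun v hv ↦ ⟨Finset.singleton_subset_iff.2 hv, Finset.card_singleton v⟩ :
      ∀ v ∈ V, {v} ⊆ V ∧ #{v} = 1)
  have hcrossings := sum_bernoulli_mul_card_filter_subset p (V := V) (j := 4)
    (T := crossingPairs F) (g := fun c ↦ c.1.ends ∪ c.2.ends) fun c hc ↦ by
      obtain ⟨⟨h₁, h₂⟩, hc⟩ := mem_crossingPairs.1 hc
      exact ⟨Finset.union_subset (hD.ends_subset h₁) (hD.ends_subset h₂), by
        rw [card_union_of_disjoint (hD.disjoint_ends h₁ h₂ hc), hD.card_ends h₁, hD.card_ends h₂]⟩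
  rw [← hedges, mul_assoc, ← pow_one p, ← hvertices, pow_one, ← hcrossings, mul_sum,
    ← sum_add_distrib]
  refine sum_le_sum fun W hW ↦ ?_
  have vertices_eq : {v ∈ V | {v} ⊆ W} = W := by
    simpa only [Finset.singleton_subset_iff, filter_mem_eq_inter, Finset.inter_eq_right,
      Finset.mem_powerset] using hW
  have induced_bound : (#{e ∈ F | e.ends ⊆ W} : ℝ) ≤
      3 * #{v ∈ V | {v} ⊆ W} + #{c ∈ crossingPairs F | c.1.ends ∪ c.2.ends ⊆ W} := by
    rw [vertices_eq]
    exact_mod_cast hD.card_filter_ends_subset_le W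
  have weight_nonneg : 0 ≤ p ^ #W * (1 - p) ^ #(V \ W) :=
    mul_nonneg (pow_nonneg hp.1 _) (pow_nonneg (sub_nonneg.2 hp.2) _)
  linarith [mul_le_mul_of_nonneg_left induced_bound weight_nonneg]

/-- The abscissae of the points of `P` on the arc `γ`. -/
def abscissae (P : Finset (ℝ × ℝ)) (γ : PlanarArc) : Finset ℝ :=
  {p ∈ P | p ∈ γ.graph}.image Prod.fst

/-- The pieces into which the points of `P` cut the arc `γ`, without the two outer ones. -/
def edgesOn (P : Finset (ℝ × ℝ)) (γ : PlanarArc) : Finset PlanarArc :=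
  (consecutive (abscissae P γ)).image fun ab ↦ { γ with left := ab.1, right := ab.2 }

/-- The drawing with vertex set `P` whose edges join neighbouring points of `P` on the arcs of
`S`. -/
def arrangement (P : Finset (ℝ × ℝ)) (S : Finset PlanarArc) : Finset PlanarArc :=
  S.biUnion (edgesOn P)

variable {P : Finset (ℝ × ℝ)} {S : Finset PlanarArc} {γ γ' : PlanarArc}

theorem injOn_fst_graph (γ : PlanarArc) : InjOn Prod.fst γ.graph :=
  fun p hp q hq h ↦ Prod.ext h (by rw [← hp.2, ← hq.2, h])

theorem card_filter_mem_graph_le (P : Finset (ℝ × ℝ)) (γ : PlanarArc) :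
    #{p ∈ P | p ∈ γ.graph} ≤ #(edgesOn P γ) + 1 := by
  have inj : Function.Injective fun ab : ℝ × ℝ ↦ ({ γ with left := ab.1, right := ab.2 } :
      PlanarArc) := fun ab cd h ↦ by
    simpa only [PlanarArc.mk.injEq, and_true, ← Prod.ext_iff] using h
  have card_abscissae : #(abscissae P γ) = #{p ∈ P | p ∈ γ.graph} :=
    card_image_of_injOn (γ.injOn_fst_graph.mono fun p hp ↦ (Finset.mem_filter.1 hp).2)
  rw [edgesOn, card_image_of_injective _ inj, ← card_abscissae]
  exact card_le_card_consecutive_add_one _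

theorem left_lt_right_of_mem_edgesOn (he : e ∈ edgesOn P γ) : e.left < e.right := by
  obtain ⟨ab, hab, rfl⟩ := Finset.mem_image.1 he
  exact (Finset.mem_filter.1 hab).2.1

theorem mem_of_mem_abscissae {x : ℝ} (hx : x ∈ abscissae P γ) :
    x ∈ Icc γ.left γ.right ∧ (x, γ x) ∈ P := by
  obtain ⟨p, hp, rfl⟩ := Finset.mem_image.1 hx
  obtain ⟨hp, hγ⟩ := Finset.mem_filter.1 hp
  exact ⟨hγ.1, by rwa [hγ.2]⟩

theorem ends_subset_of_mem_edgesOn (he : e ∈ edgesOn P γ) : e.ends ⊆ P := by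
  obtain ⟨ab, hab, rfl⟩ := Finset.mem_image.1 he
  obtain ⟨ha, hb⟩ := Finset.mem_product.1 (Finset.mem_filter.1 hab).1
  exact Finset.insert_subset_iff.2 ⟨(mem_of_mem_abscissae ha).2,
    Finset.singleton_subset_iff.2 (mem_of_mem_abscissae hb).2⟩

theorem graph_subset_of_mem_edgesOn (he : e ∈ edgesOn P γ) : e.graph ⊆ γ.graph := by
  obtain ⟨ab, hab, rfl⟩ := Finset.mem_image.1 he
  obtain ⟨ha, hb⟩ := Finset.mem_product.1 (Finset.mem_filter.1 hab).1
  exact fun p hp ↦ ⟨⟨(mem_of_mem_abscissae ha).1.1.trans hp.1.1,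
    hp.1.2.trans (mem_of_mem_abscissae hb).1.2⟩, hp.2⟩

theorem eq_of_mem_edgesOn (he : e ∈ edgesOn P γ) (he' : e' ∈ edgesOn P γ) {x : ℝ}
    (hx : x ∈ Ioo e.left e.right) (hx' : x ∈ Ioo e'.left e'.right) : e = e' := by
  obtain ⟨ab, hab, rfl⟩ := Finset.mem_image.1 he
  obtain ⟨cd, hcd, rfl⟩ := Finset.mem_image.1 he'
  rw [eq_of_mem_consecutive hab hcd hx hx']

theorem pseudosegments_edgesOn (P : Finset (ℝ × ℝ)) (γ : PlanarArc) :
    Pseudosegments (edgesOn P γ : Set PlanarArc) := by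
  refine fun e he e' he' hne p hp q hq ↦ e.injOn_fst_graph hp.1 hq.1 ?_
  by_contra hpq
  wlog hlt : p.1 < q.1 generalizing p q
  · exact this q hq p hp (Ne.symm hpq) ((Ne.lt_or_gt hpq).resolve_left hlt)
  obtain ⟨x, hpx, hxq⟩ := exists_between hlt
  exact hne (eq_of_mem_edgesOn he he' ⟨hp.1.1.1.trans_lt hpx, hxq.trans_le hq.1.1.2⟩
    ⟨hp.2.1.1.trans_lt hpx, hxq.trans_le hq.2.1.2⟩)

theorem isDrawing_arrangement (P : Finset (ℝ × ℝ)) (hS : Pseudosegments (S : Set PlanarArc)) :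
    IsDrawing P (arrangement P S) where
  left_lt_right e he := by
    obtain ⟨γ, -, he⟩ := Finset.mem_biUnion.1 he
    exact left_lt_right_of_mem_edgesOn he
  source_mem e he := by
    obtain ⟨γ, -, he⟩ := Finset.mem_biUnion.1 he
    exact ends_subset_of_mem_edgesOn he (Finset.mem_insert_self _ _)
  target_mem e he := by
    obtain ⟨γ, -, he⟩ := Finset.mem_biUnion.1 he
    exact ends_subset_of_mem_edgesOn he (Finset.mem_insert_of_mem (Finset.mem_singleton_self _))
  pseudosegments e he e' he' hne := by
    obtain ⟨γ, hγ, he⟩ := Finset.mem_biUnion.1 he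
    obtain ⟨γ', hγ', he'⟩ := Finset.mem_biUnion.1 he'
    rcases eq_or_ne γ γ' with rfl | hγγ'
    · exact pseudosegments_edgesOn P γ he he' hne
    · exact (hS hγ hγ' hγγ').anti (inter_subset_inter (graph_subset_of_mem_edgesOn he)
        (graph_subset_of_mem_edgesOn he'))

theorem disjoint_edgesOn (hS : (γ.graph ∩ γ'.graph).Subsingleton) :
    Disjoint (edgesOn P γ) (edgesOn P γ') := by
  refine Finset.disjoint_left.2 fun e he he' ↦ ?_
  have hlt := left_lt_right_of_mem_edgesOn he
  have mem {p : ℝ × ℝ} (hp : p ∈ e.ends) : p ∈ γ.graph ∩ γ'.graph :=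
    ⟨graph_subset_of_mem_edgesOn he (mem_graph_of_mem_ends hlt hp),
      graph_subset_of_mem_edgesOn he' (mem_graph_of_mem_ends hlt hp)⟩
  have ends_eq : e.source = e.target := hS (mem (by simp [ends])) (mem (by simp [ends]))
  exact hlt.ne (congrArg Prod.fst ends_eq)

theorem sum_card_filter_mem_graph_le (P : Finset (ℝ × ℝ))
    (hS : Pseudosegments (S : Set PlanarArc)) :
    ∑ γ ∈ S, #{p ∈ P | p ∈ γ.graph} ≤ #(arrangement P S) + #S := by
  rw [arrangement, card_biUnion fun γ hγ γ' hγ' hne ↦ disjoint_edgesOn (hS hγ hγ' hne)]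
  calc ∑ γ ∈ S, #{p ∈ P | p ∈ γ.graph} ≤ ∑ γ ∈ S, (#(edgesOn P γ) + 1) :=
        sum_le_sum fun γ _ ↦ card_filter_mem_graph_le P γ
    _ = ∑ γ ∈ S, #(edgesOn P γ) + #S := by rw [sum_add_distrib, card_eq_sum_ones]

theorem card_crossingPairs_arrangement_le (P : Finset (ℝ × ℝ))
    (hS : Pseudosegments (S : Set PlanarArc)) :
    #(crossingPairs (arrangement P S)) ≤ #S ^ 2 := by
  rw [sq, ← card_product]
  refine card_le_card_of_forall_subsingleton
    (fun c γγ ↦ c.1 ∈ edgesOn P γγ.1 ∧ c.2 ∈ edgesOn P γγ.2) ?_ ?_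
  · intro c hc
    obtain ⟨⟨h₁, h₂⟩, -⟩ := mem_crossingPairs.1 hc
    obtain ⟨γ₁, hγ₁, h₁⟩ := Finset.mem_biUnion.1 h₁
    obtain ⟨γ₂, hγ₂, h₂⟩ := Finset.mem_biUnion.1 h₂
    exact ⟨(γ₁, γ₂), Finset.mem_product.2 ⟨hγ₁, hγ₂⟩, h₁, h₂⟩
  · rintro ⟨γ₁, γ₂⟩ hγ c ⟨hc, h₁, h₂⟩ d ⟨hd, h₁', h₂'⟩
    obtain ⟨-, hne, x, ⟨hx₁, hx₂⟩, heq⟩ := mem_crossingPairs.1 hc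
    obtain ⟨-, -, y, ⟨hy₁, hy₂⟩, heq'⟩ := mem_crossingPairs.1 hd
    have hγ_ne : γ₁ ≠ γ₂ := by
      rintro rfl
      exact hne (eq_of_mem_edgesOn h₁ h₂ hx₁ hx₂)
    obtain ⟨hγ₁, hγ₂⟩ := Finset.mem_product.1 hγ
    have mem_graphs {c : PlanarArc × PlanarArc} {x : ℝ} (h₁ : c.1 ∈ edgesOn P γ₁)
        (h₂ : c.2 ∈ edgesOn P γ₂) (hx₁ : x ∈ Ioo c.1.left c.1.right)
        (hx₂ : x ∈ Ioo c.2.left c.2.right) (heq : c.1 x = c.2 x) :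
        (x, c.1 x) ∈ γ₁.graph ∩ γ₂.graph :=
      ⟨graph_subset_of_mem_edgesOn h₁ ⟨Ioo_subset_Icc_self hx₁, rfl⟩,
        graph_subset_of_mem_edgesOn h₂ ⟨Ioo_subset_Icc_self hx₂, heq.symm⟩⟩
    have x_eq : x = y := congrArg Prod.fst
      (hS hγ₁ hγ₂ hγ_ne (mem_graphs h₁ h₂ hx₁ hx₂ heq) (mem_graphs h₁' h₂' hy₁ hy₂ heq'))
    subst x_eq
    exact Prod.ext (eq_of_mem_edgesOn h₁ h₁' hx₁ hy₁) (eq_of_mem_edgesOn h₂ h₂' hx₂ hy₂)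

/-- The crossing inequality is applied to the arrangement with sampling probability `6 / k`. -/
theorem szemeredi_trotter (hS : Pseudosegments (S : Set PlanarArc)) {k : ℕ} (hk : 6 ≤ k)
    (hP : ∀ p ∈ P, k ≤ #{γ ∈ S | p ∈ γ.graph}) :
    (k : ℝ) ^ 3 * #P ≤ 72 * (#S : ℝ) ^ 2 + 2 * (k : ℝ) ^ 2 * #S := by
  have hk' : (6 : ℝ) ≤ k := by exact_mod_cast hk
  have incidences : (k * #P : ℝ) ≤ #(arrangement P S) + #S := by
    have double_count := sum_card_bipartiteAbove_eq_sum_card_bipartiteBelow (s := P) (t := S)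
      fun p γ ↦ p ∈ γ.graph
    have rich := card_nsmul_le_sum P _ k hP
    have poor := sum_card_filter_mem_graph_le P hS
    simp only [bipartiteAbove, bipartiteBelow] at double_count
    rw [smul_eq_mul, mul_comm, double_count] at rich
    exact_mod_cast rich.trans poor
  have crossings : (#(crossingPairs (arrangement P S)) : ℝ) ≤ (#S : ℝ) ^ 2 := by
    exact_mod_cast card_crossingPairs_arrangement_le P hS
  have edges : (k : ℝ) ^ 2 * #(arrangement P S) ≤ (k : ℝ) ^ 3 * #P / 2 + 36 * (#S : ℝ) ^ 2 := by
    have h := (isDrawing_arrangement P hS).crossing_inequality (p := 6 / k)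
      ⟨by positivity, (div_le_one (by linarith)).2 hk'⟩
    calc (k : ℝ) ^ 2 * #(arrangement P S)
        = (k : ℝ) ^ 4 / 36 * ((6 / k) ^ 2 * #(arrangement P S)) := by field_simp; norm_num
      _ ≤ (k : ℝ) ^ 4 / 36 * (3 * (6 / k) * #P + (6 / k) ^ 4 * (#S : ℝ) ^ 2) := by
        gcongr
        exact h.trans (by gcongr)
      _ = (k : ℝ) ^ 3 * #P / 2 + 36 * (#S : ℝ) ^ 2 := by field_simp; ring
  have scaled := mul_le_mul_of_nonneg_left incidences (sq_nonneg (k : ℝ))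
  linarith

end PlanarArc

section Circle

open Finset
open scoped Pointwise ComplexConjugate

theorem eq_or_eq_of_add_eq_add {b c b' c' : ℂ} (hb : ‖b‖ = 1) (hc : ‖c‖ = 1) (hb' : ‖b'‖ = 1)
    (hc' : ‖c'‖ = 1) (h : b + c = b' + c') (h0 : b + c ≠ 0) : b' = b ∨ b' = c := by
  have conj_mul_mul {u v : ℂ} (hu : ‖u‖ = 1) (hv : ‖v‖ = 1) : conj (u + v) * (u * v) = u + v := by
    have hu' : conj u * u = 1 := by rw [Complex.conj_mul', hu]; norm_num
    have hv' : conj v * v = 1 := by rw [Complex.conj_mul', hv]; norm_num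
    rw [map_add]
    linear_combination v * hu' + u * hv'
  have mul_eq : b * c = b' * c' := by
    refine mul_left_cancel₀ ((map_ne_zero conj).2 h0) ?_
    rw [conj_mul_mul hb hc, h, conj_mul_mul hb' hc']
  have roots : (b' - b) * (b' - c) = 0 := by linear_combination mul_eq - b' * h
  simpa only [mul_eq_zero, sub_eq_zero] using roots

variable {L : Finset ℂ}

theorem repCount_two_le_two (hL : ∀ a ∈ L, ‖a‖ = 1) {s : ℂ} (hs : s ≠ 0) :
    repCount 2 L s ≤ 2 := by
  by_cases hrep : ∃ b ∈ L, ∃ c ∈ L, b + c = s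
  · obtain ⟨b, hb, c, hc, rfl⟩ := hrep
    refine (repCount_two_le (T := {b, c}) fun b' hb' c' hc' h ↦ ?_).trans card_le_two
    rw [mem_insert, mem_singleton]
    exact eq_or_eq_of_add_eq_add (hL b hb) (hL c hc) (hL b' hb') (hL c' hc') h.symm hs
  · push Not at hrep
    exact (repCount_two_le (T := ∅) fun b hb c hc h ↦ (hrep b hb c hc h).elim).trans (by simp)

theorem repCount_three_le (hL : ∀ a ∈ L, ‖a‖ = 1) (x : ℂ) :
    repCount 3 L x ≤ 2 * L.addConvolution (L + L) x + if x ∈ L then #L else 0 := by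
  have repCount_two (s : ℂ) :
      repCount 2 L s ≤ 2 * (if s ∈ L + L then 1 else 0) + if s = 0 then #L else 0 := by
    by_cases hs0 : s = 0
    · rw [if_pos hs0]
      exact (repCount_two_le fun b hb _ _ _ ↦ hb).trans (Nat.le_add_left _ _)
    · by_cases hs : s ∈ L + L
      · simpa [hs, hs0] using repCount_two_le_two hL hs0
      · have no_rep : ∀ b ∈ L, ∀ c ∈ L, b + c = s → b ∈ (∅ : Finset ℂ) :=
          fun b hb c hc h ↦ (hs (h ▸ add_mem_add hb hc)).elim
        exact (repCount_two_le no_rep).trans (by simp)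
  have card_le : #{a ∈ L | x - a ∈ L + L} ≤ L.addConvolution (L + L) x :=
    card_le_card_of_injOn (fun a ↦ (a, x - a))
      (fun a ha ↦ by simpa using ha) fun a _ b _ h ↦ congrArg Prod.fst h
  calc repCount 3 L x = ∑ a ∈ L, repCount 2 L (x - a) := repCount_succ 2 L x
    _ ≤ ∑ a ∈ L, (2 * (if x - a ∈ L + L then 1 else 0) + if x - a = 0 then #L else 0) :=
        sum_le_sum fun a _ ↦ repCount_two (x - a)
    _ = 2 * #{a ∈ L | x - a ∈ L + L} + if x ∈ L then #L else 0 := by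
        simp only [sum_add_distrib, ← mul_sum, ← card_filter, sub_eq_zero, sum_ite_eq]
    _ ≤ 2 * L.addConvolution (L + L) x + if x ∈ L then #L else 0 := by gcongr

/-- The upper (`σ = 1`) or lower (`σ = -1`) half of the unit circle centred at `s`. -/
def semicircle (σ : ℝ) (s : ℂ) : PlanarArc where
  left := s.re - 1
  right := s.re + 1
  toFun := ⟨fun x ↦ s.im + σ * √(1 - (x - s.re) ^ 2), by fun_prop⟩

theorem norm_eq_one_iff_re_sq_add_im_sq (w : ℂ) : ‖w‖ = 1 ↔ w.re ^ 2 + w.im ^ 2 = 1 := by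
  rw [← sq_eq_sq₀ (norm_nonneg w) zero_le_one, one_pow, Complex.sq_norm, Complex.normSq_apply,
    ← sq, ← sq]

theorem mem_graph_semicircle {σ : ℝ} (hσ : σ ^ 2 = 1) {s z : ℂ} :
    Complex.equivRealProd z ∈ (semicircle σ s).graph ↔ ‖z - s‖ = 1 ∧ 0 ≤ σ * (z - s).im := by
  change z.re ∈ Set.Icc (s.re - 1) (s.re + 1) ∧ s.im + σ * √(1 - (z.re - s.re) ^ 2) = z.im ↔ _
  rw [norm_eq_one_iff_re_sq_add_im_sq, Complex.sub_re, Complex.sub_im]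
  constructor
  · rintro ⟨⟨hl, hr⟩, him⟩
    have im_eq : z.im - s.im = σ * √(1 - (z.re - s.re) ^ 2) := by linarith
    have sqrt_sq := sq_sqrt (show 0 ≤ 1 - (z.re - s.re) ^ 2 by nlinarith)
    rw [im_eq, mul_pow, hσ, sqrt_sq, ← mul_assoc, ← sq, hσ]
    exact ⟨by ring, by positivity⟩
  · rintro ⟨hnorm, hsign⟩
    have hre := abs_le.1 ((sq_le_one_iff_abs_le_one (z.re - s.re)).1 (by nlinarith))
    have sqrt_eq : √(1 - (z.re - s.re) ^ 2) = σ * (z.im - s.im) := by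
      rw [← sqrt_sq hsign, mul_pow, hσ]
      congr 1
      linarith
    refine ⟨⟨by linarith [hre.1], by linarith [hre.2]⟩, ?_⟩
    rw [sqrt_eq, ← mul_assoc, ← sq, hσ]
    ring

theorem semicircle_injective (σ : ℝ) : Function.Injective (semicircle σ) := by
  intro s t h
  have hre : s.re = t.re := by simpa [semicircle] using congrArg PlanarArc.left h
  have him := congrArg (fun γ : PlanarArc ↦ γ γ.left) h
  exact Complex.ext hre (by simpa [semicircle] using him)

theorem eq_or_eq_neg_of_im_eq_zero {u v : ℂ} (hu : ‖u‖ = 1) (hv : ‖v‖ = 1) (hu0 : u.im = 0)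
    (hv0 : v.im = 0) : u = v ∨ u = -v := by
  have re_sq {w : ℂ} (hw : ‖w‖ = 1) (hw0 : w.im = 0) : w.re ^ 2 = 1 := by
    simpa [hw0] using (norm_eq_one_iff_re_sq_add_im_sq w).1 hw
  rcases sq_eq_sq_iff_eq_or_eq_neg.1 ((re_sq hu hu0).trans (re_sq hv hv0).symm) with h | h
  · exact Or.inl (Complex.ext h (hu0.trans hv0.symm))
  · exact Or.inr (Complex.ext h (by rw [Complex.neg_im, hu0, hv0, neg_zero]))

/-- Two common points of two circles are symmetric about the midpoint of the centres, hence they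
lie on half circles of the same kind only if they are the endpoints of both. -/
theorem eq_of_common_points_semicircles {σ : ℝ} (hσ : σ ≠ 0) {s t z w : ℂ} (hst : s ≠ t)
    (hzs : ‖z - s‖ = 1 ∧ 0 ≤ σ * (z - s).im) (hzt : ‖z - t‖ = 1 ∧ 0 ≤ σ * (z - t).im)
    (hws : ‖w - s‖ = 1 ∧ 0 ≤ σ * (w - s).im) (hwt : ‖w - t‖ = 1 ∧ 0 ≤ σ * (w - t).im) :
    z = w := by
  by_contra hzw
  have hsum : z - s + -(w - s) = z - t + -(w - t) := by ring
  have hne : z - s + -(w - s) ≠ 0 := by simpa [sub_eq_zero] using hzw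
  rcases eq_or_eq_of_add_eq_add hzs.1 ((norm_neg _).trans hws.1) hzt.1 ((norm_neg _).trans hwt.1)
    hsum hne with h | h
  · exact hst (sub_right_injective h).symm
  have h' : w - t = -(z - s) := by linear_combination h
  have im_eq_zero {u v : ℂ} (huv : v = -u) (hu : 0 ≤ σ * u.im) (hv : 0 ≤ σ * v.im) :
      u.im = 0 := by
    rw [huv, Complex.neg_im] at hv
    exact (mul_eq_zero.1 (by linarith : σ * u.im = 0)).resolve_left hσ
  rcases eq_or_eq_neg_of_im_eq_zero hzs.1 hws.1 (im_eq_zero h' hzs.2 hwt.2)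
    (im_eq_zero h hws.2 hzt.2) with heq | heq
  · exact hzw (sub_left_injective heq)
  · exact hst (sub_right_injective (heq.trans h.symm))

theorem pseudosegments_image_semicircle {σ : ℝ} (hσ : σ ^ 2 = 1) (S : Set ℂ) :
    PlanarArc.Pseudosegments (semicircle σ '' S) := by
  rintro _ ⟨s, -, rfl⟩ _ ⟨t, -, rfl⟩ hne p hp q hq
  obtain ⟨z, rfl⟩ := Complex.equivRealProd.surjective p
  obtain ⟨w, rfl⟩ := Complex.equivRealProd.surjective q
  have hσ0 : σ ≠ 0 := by
    rintro rfl
    norm_num at hσ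
  simp only [Set.mem_inter_iff, mem_graph_semicircle hσ] at hp hq
  rw [eq_of_common_points_semicircles hσ0 (fun h ↦ hne (congrArg _ h)) hp.1 hp.2 hq.1 hq.2]

theorem addConvolution_le_card_semicircles {σ : ℝ} (hσ : σ ^ 2 = 1) {A : Finset ℂ}
    (hA : ∀ a ∈ A, ‖a‖ = 1 ∧ 0 ≤ σ * a.im) (S : Finset ℂ) (x : ℂ) :
    A.addConvolution S x ≤
      #{γ ∈ S.image (semicircle σ) | Complex.equivRealProd x ∈ γ.graph} := by
  refine card_le_card_of_injOn (fun t ↦ semicircle σ t.2) (fun t ht ↦ ?_) fun t ht t' ht' h ↦ ?_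
  · obtain ⟨ht, hx⟩ := mem_filter.1 ht
    obtain ⟨ht₁, ht₂⟩ := mem_product.1 ht
    refine mem_filter.2 ⟨mem_image_of_mem _ ht₂, (mem_graph_semicircle hσ).2 ?_⟩
    rw [← hx, add_sub_cancel_right]
    exact hA _ ht₁
  · have hsnd := semicircle_injective σ h
    have hsum := (mem_filter.1 ht).2.trans (mem_filter.1 ht').2.symm
    rw [hsnd, add_left_inj] at hsum
    exact Prod.ext hsum hsnd

theorem card_rich_translates_le {σ : ℝ} (hσ : σ ^ 2 = 1) {A : Finset ℂ}
    (hA : ∀ a ∈ A, ‖a‖ = 1 ∧ 0 ≤ σ * a.im) (S Y : Finset ℂ) {k : ℕ} (hk : 6 ≤ k) :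
    (k : ℝ) ^ 3 * #{x ∈ Y | k ≤ A.addConvolution S x} ≤
      72 * (#S : ℝ) ^ 2 + 2 * (k : ℝ) ^ 2 * #S := by
  have hS := pseudosegments_image_semicircle hσ (S : Set ℂ)
  rw [← coe_image] at hS
  have h := PlanarArc.szemeredi_trotter hS hk
    (P := {x ∈ Y | k ≤ A.addConvolution S x}.map Complex.equivRealProd.toEmbedding) fun p hp ↦ by
      obtain ⟨x, hx, rfl⟩ := mem_map.1 hp
      exact (mem_filter.1 hx).2.trans (addConvolution_le_card_semicircles hσ hA S x)
  rwa [card_map, card_image_of_injective S (semicircle_injective σ)] at h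

theorem card_superlevel_addConvolution_le {σ : ℝ} (hσ : σ ^ 2 = 1) {A S : Finset ℂ} {N : ℕ}
    (hA : ∀ a ∈ A, ‖a‖ = 1 ∧ 0 ≤ σ * a.im) (hAN : #A ≤ N) (hSN : #S ≤ N ^ 2) (Y : Finset ℂ)
    (k : ℕ) : (k : ℝ) ^ 3 * #{x ∈ Y | k ≤ A.addConvolution S x} ≤ 74 * (N : ℝ) ^ 4 := by
  rcases lt_or_ge k 6 with hk | hk
  · have markov : k * #{x ∈ Y | k ≤ A.addConvolution S x} ≤ N ^ 3 := by
      have h := card_nsmul_le_sum {x ∈ Y | k ≤ A.addConvolution S x} (A.addConvolution S) k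
        fun x hx ↦ (mem_filter.1 hx).2
      rw [smul_eq_mul, mul_comm] at h
      calc k * #{x ∈ Y | k ≤ A.addConvolution S x} ≤ #A * #S :=
            h.trans (sum_addConvolution_le _ _ _)
        _ ≤ N * N ^ 2 := Nat.mul_le_mul hAN hSN
        _ = N ^ 3 := by ring
    have pow_three_le : N ^ 3 ≤ N ^ 4 := by
      rcases N.eq_zero_or_pos with rfl | hN
      · simp
      · exact Nat.pow_le_pow_right hN (by norm_num)
    have : k ^ 3 * #{x ∈ Y | k ≤ A.addConvolution S x} ≤ 74 * N ^ 4 := by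
      calc k ^ 3 * #{x ∈ Y | k ≤ A.addConvolution S x}
          = k ^ 2 * (k * #{x ∈ Y | k ≤ A.addConvolution S x}) := by ring
        _ ≤ 5 ^ 2 * N ^ 3 := Nat.mul_le_mul (Nat.pow_le_pow_left (by omega) 2) markov
        _ ≤ 74 * N ^ 4 := Nat.mul_le_mul (by norm_num) pow_three_le
    exact_mod_cast this
  rcases lt_or_ge N k with hNk | hkN
  · have superlevel_eq_empty : {x ∈ Y | k ≤ A.addConvolution S x} = ∅ :=
      filter_eq_empty_iff.2 fun x _ ↦ by
        have : A.addConvolution S x ≤ #A := addConvolution_le_card_left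
        omega
    rw [superlevel_eq_empty, card_empty, Nat.cast_zero, mul_zero]
    positivity
  · have hSN' : (#S : ℝ) ≤ (N : ℝ) ^ 2 := by exact_mod_cast hSN
    calc (k : ℝ) ^ 3 * #{x ∈ Y | k ≤ A.addConvolution S x}
        ≤ 72 * (#S : ℝ) ^ 2 + 2 * (k : ℝ) ^ 2 * #S := card_rich_translates_le hσ hA S Y hk
      _ ≤ 72 * ((N : ℝ) ^ 2) ^ 2 + 2 * (N : ℝ) ^ 2 * (N : ℝ) ^ 2 := by gcongr
      _ = 74 * (N : ℝ) ^ 4 := by ring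

theorem sum_addConvolution_sq_le_of_semicircle {σ : ℝ} (hσ : σ ^ 2 = 1) {A S : Finset ℂ} {N : ℕ}
    (hA : ∀ a ∈ A, ‖a‖ = 1 ∧ 0 ≤ σ * a.im) (hAN : #A ≤ N) (hSN : #S ≤ N ^ 2) (Y : Finset ℂ) :
    (∑ x ∈ Y, A.addConvolution S x ^ 2 : ℝ) ≤ 297 * (N : ℝ) ^ 3 * √N := by
  have sum_le : (∑ x ∈ Y, (A.addConvolution S x : ℝ)) ≤ (N : ℝ) ^ 3 := by
    have h := (sum_addConvolution_le A S Y).trans (Nat.mul_le_mul hAN hSN)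
    rw [mul_comm N, ← pow_succ] at h
    exact_mod_cast h
  have tail_le : 4 * (74 * (N : ℝ) ^ 4) / (N.sqrt + 1) ≤ 296 * (N : ℝ) ^ 3 * √N := by
    rw [div_le_iff₀ (by positivity)]
    calc 4 * (74 * (N : ℝ) ^ 4) = 296 * (N : ℝ) ^ 3 * √N * √N := by
          rw [mul_assoc _ √N, mul_self_sqrt N.cast_nonneg]
          ring
      _ ≤ 296 * (N : ℝ) ^ 3 * √N * (N.sqrt + 1) := by
          gcongr
          exact real_sqrt_le_nat_sqrt_succ
  calc (∑ x ∈ Y, A.addConvolution S x ^ 2 : ℝ)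
      ≤ N.sqrt * ∑ x ∈ Y, (A.addConvolution S x : ℝ) + 4 * (74 * (N : ℝ) ^ 4) / (N.sqrt + 1) :=
        sum_sq_le_of_card_superlevel_le (card_superlevel_addConvolution_le hσ hA hAN hSN Y) N.sqrt
    _ ≤ √N * (N : ℝ) ^ 3 + 296 * (N : ℝ) ^ 3 * √N := by
        gcongr
        exact nat_sqrt_le_real_sqrt
    _ = 297 * (N : ℝ) ^ 3 * √N := by ring

theorem sum_addConvolution_sq_le (hL : ∀ a ∈ L, ‖a‖ = 1) {S : Finset ℂ} (hS : #S ≤ #L ^ 2)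
    (Y : Finset ℂ) : (∑ x ∈ Y, L.addConvolution S x ^ 2 : ℝ) ≤ 1188 * (#L : ℝ) ^ 3 * √(#L) := by
  set upper := {a ∈ L | 0 ≤ a.im}
  set lower := {a ∈ L | a.im ≤ 0}
  have union_eq : upper ∪ lower = L := by
    rw [← filter_or, filter_true_of_mem fun a _ ↦ le_total 0 a.im]
  have sum_upper := sum_addConvolution_sq_le_of_semicircle (σ := 1) (by norm_num)
    (fun a ha ↦ ⟨hL a (filter_subset _ _ ha), by simpa using (mem_filter.1 ha).2⟩)
    (card_filter_le L _) hS Y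
  have sum_lower := sum_addConvolution_sq_le_of_semicircle (σ := -1) (by norm_num)
    (fun a ha ↦ ⟨hL a (filter_subset _ _ ha), by simpa using (mem_filter.1 ha).2⟩)
    (card_filter_le L _) hS Y
  have sq_le (x : ℂ) : (L.addConvolution S x : ℝ) ^ 2 ≤
      2 * (upper.addConvolution S x : ℝ) ^ 2 + 2 * (lower.addConvolution S x : ℝ) ^ 2 := by
    have h : (L.addConvolution S x : ℝ) ≤ upper.addConvolution S x + lower.addConvolution S x := by
      exact_mod_cast union_eq ▸ addConvolution_union_le upper lower S x
    calc (L.addConvolution S x : ℝ) ^ 2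
        ≤ (upper.addConvolution S x + lower.addConvolution S x : ℝ) ^ 2 := by gcongr
      _ ≤ 2 * ((upper.addConvolution S x : ℝ) ^ 2 + (lower.addConvolution S x : ℝ) ^ 2) :=
          add_sq_le
      _ = _ := by ring
  calc (∑ x ∈ Y, L.addConvolution S x ^ 2 : ℝ)
      ≤ 2 * ∑ x ∈ Y, (upper.addConvolution S x : ℝ) ^ 2 +
        2 * ∑ x ∈ Y, (lower.addConvolution S x : ℝ) ^ 2 := by
        rw [mul_sum, mul_sum, ← sum_add_distrib]
        exact sum_le_sum fun x _ ↦ sq_le x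
    _ ≤ 1188 * (#L : ℝ) ^ 3 * √(#L) := by linarith

theorem energy_three_le (hL : ∀ a ∈ L, ‖a‖ = 1) :
    (energy 3 (L : Set ℂ) : ℝ) ≤ 9506 * (#L : ℝ) ^ 3 * √(#L) := by
  set Y := 3 • L
  have repCount_sq_le (x : ℂ) : repCount 3 L x ^ 2 ≤
      8 * L.addConvolution (L + L) x ^ 2 + if x ∈ L then 2 * #L ^ 2 else 0 := by
    have h := Nat.pow_le_pow_left (repCount_three_le hL x) 2
    refine h.trans (add_sq_le.trans ?_)
    split_ifs <;> nlinarith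
  have energy_le : energy 3 (L : Set ℂ) ≤
      8 * ∑ x ∈ Y, L.addConvolution (L + L) x ^ 2 + 2 * #L ^ 3 := by
    have diagonal : ∑ x ∈ Y, (if x ∈ L then 2 * #L ^ 2 else 0) ≤ 2 * #L ^ 3 := by
      rw [sum_ite_mem, sum_const, smul_eq_mul]
      calc #(Y ∩ L) * (2 * #L ^ 2) ≤ #L * (2 * #L ^ 2) := by gcongr; exact inter_subset_right
        _ = 2 * #L ^ 3 := by ring
    rw [energy_coe_eq_sum_repCount_sq, mul_sum]
    refine (sum_le_sum fun x _ ↦ repCount_sq_le x).trans ?_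
    rw [sum_add_distrib]
    gcongr
  have hconv := sum_addConvolution_sq_le hL (card_add_le.trans_eq (sq #L).symm) Y
  have cube_le : (#L : ℝ) ^ 3 ≤ (#L : ℝ) ^ 3 * √(#L) := by
    rcases (#L).eq_zero_or_pos with h | h
    · simp [h]
    · exact le_mul_of_one_le_right (by positivity) (one_le_sqrt.2 (by exact_mod_cast h))
  calc (energy 3 (L : Set ℂ) : ℝ)
      ≤ 8 * ∑ x ∈ Y, (L.addConvolution (L + L) x : ℝ) ^ 2 + 2 * (#L : ℝ) ^ 3 := by
        exact_mod_cast energy_le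
    _ ≤ 9506 * (#L : ℝ) ^ 3 * √(#L) := by linarith

end Circle

theorem nonempty_linearIsometryEquiv_complex {V : Type*} [NormedAddCommGroup V]
    [InnerProductSpace ℝ V] (hV : Module.finrank ℝ V = 2) : Nonempty (V ≃ₗᵢ[ℝ] ℂ) := by
  have : FiniteDimensional ℝ V := Module.finite_of_finrank_pos (by omega)
  exact ⟨(stdOrthonormalBasis ℝ V).equiv Complex.orthonormalBasisOneI (finCongr hV)⟩

theorem additive_energy_circle_general {V : Type*} [NormedAddCommGroup V] [InnerProductSpace ℝ V]
    (hV : Module.finrank ℝ V = 2) :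
    ∃ C > (0 : ℝ), ∀ Λ : Set V, Λ.Finite → (∀ x ∈ Λ, ‖x‖ = 1) →
      (energy 3 Λ : ℝ) ≤ C * (Λ.ncard : ℝ) ^ ((7 : ℝ) / 2) := by
  classical
  obtain ⟨φ⟩ := nonempty_linearIsometryEquiv_complex hV
  refine ⟨9506, by norm_num, fun Λ hfin hunit ↦ ?_⟩
  lift Λ to Finset V using hfin
  set L := Λ.image φ
  have hL : ∀ a ∈ L, ‖a‖ = 1 := by
    simpa only [L, Finset.forall_mem_image, φ.norm_map, Finset.mem_coe] using hunit
  have energy_eq : energy 3 (L : Set ℂ) = energy 3 (Λ : Set V) := by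
    rw [Finset.coe_image]
    exact energy_image_of_injective (f := (φ : V →+ ℂ)) φ.injective 3 Λ
  have rpow_eq (t : ℝ) (ht : 0 ≤ t) : t ^ ((7 : ℝ) / 2) = t ^ 3 * √t := by
    rw [show (7 : ℝ) / 2 = (3 : ℕ) + 1 / 2 by norm_num, rpow_add' ht (by norm_num), rpow_natCast,
      sqrt_eq_rpow]
  rw [Set.ncard_coe_finset, rpow_eq _ (Nat.cast_nonneg _), ← mul_assoc, ← energy_eq,
    ← Finset.card_image_of_injective Λ φ.injective]
  exact energy_three_le hL

theorem natCast_rpow_le_rpow_add (n : ℕ) {s ε : ℝ} (hs : s ≠ 0) (hε : 0 ≤ ε) :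
    (n : ℝ) ^ s ≤ (n : ℝ) ^ (s + ε) := by
  rcases n.eq_zero_or_pos with rfl | hn
  · rw [Nat.cast_zero, zero_rpow hs]
    positivity
  · exact rpow_le_rpow_of_exponent_le (by exact_mod_cast hn) (le_add_of_nonneg_right hε)

theorem additive_energy_circle :
    ∀ ε > (0 : ℝ), ∃ C > (0 : ℝ),
      ∀ Λ : Set (EuclideanSpace ℝ (Fin 2)), Λ.Finite →
        (∀ x ∈ Λ, ‖x‖ = 1) →
        (energy 3 Λ : ℝ) ≤ C * (Λ.ncard : ℝ) ^ ((7 : ℝ) / 2 + ε) := by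
  intro ε hε
  obtain ⟨C, hC, h⟩ := additive_energy_circle_general finrank_euclideanSpace_fin
  exact ⟨C, hC, fun Λ hfin hunit ↦ (h Λ hfin hunit).trans <| mul_le_mul_of_nonneg_left
    (natCast_rpow_le_rpow_add _ (by norm_num) hε.le) hC.le⟩

end
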